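/- arXiv:2302.01138 — 2 statements merged into one kernel-verified Lean document; each statement's English description precedes it below -/
import Mathlib

section
/- For integers L ≥ 1 and p ≥ 1, the series Z'(L,p) := ∑_{k≥0} (12√3)^{-k} · #T²(L,p,k) equals (1/2) · 3^{L+p}/(L+p) · L·binom(2L,L) · p·binom(2p,p), and consequently Z'(L,p) = 6⁴·π/(L+p) · C¹(L) · C¹(p), where C¹(n) = 3^{n-2}/(4√(2π)) · n · binom(2n,n). -/
open Polynomial in
/-- The polynomial `x ↦ x / (x + 3k/2) * binom (x + 3k/2, k)`: the coefficient of `z ^ k` in `B ^ x`,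
where `B = 1 + z * B ^ (3/2)`. -/
noncomputable def fussPoly : ℕ → ℝ[X]
  | 0 => 1
  | k + 1 => C ((k + 1).factorial : ℝ)⁻¹ * X * (ascPochhammer ℝ k).comp (X + C (((k : ℝ) + 3) / 2))

@[simp]
lemma fussPoly_zero_eval (x : ℝ) : (fussPoly 0).eval x = 1 := by simp [fussPoly]

lemma fussPoly_succ_eval (k : ℕ) (x : ℝ) :
    (fussPoly (k + 1)).eval x =
      ((k + 1).factorial : ℝ)⁻¹ * x * (ascPochhammer ℝ k).eval (x + ((k : ℝ) + 3) / 2) := by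
  simp [fussPoly]

lemma fussPoly_succ_eval_zero (k : ℕ) : (fussPoly (k + 1)).eval 0 = 0 := by
  simp [fussPoly_succ_eval]

lemma ascPochhammer_succ_eval_left (k : ℕ) (x : ℝ) :
    (ascPochhammer ℝ (k + 1)).eval x = x * (ascPochhammer ℝ k).eval (x + 1) := by
  simp [ascPochhammer_succ_left]

lemma ascPochhammer_eval_mono (k : ℕ) {x y : ℝ} (hx : 0 < x) (hxy : x ≤ y) :
    (ascPochhammer ℝ k).eval x ≤ (ascPochhammer ℝ k).eval y := by
  induction k with
  | zero => simp
  | succ k ih =>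
    rw [ascPochhammer_succ_eval, ascPochhammer_succ_eval]
    have := (ascPochhammer_pos k y (hx.trans_le hxy)).le
    gcongr

lemma fussPoly_eval_nonneg (k : ℕ) {x : ℝ} (hx : 0 ≤ x) : 0 ≤ (fussPoly k).eval x := by
  cases k with
  | zero => simp
  | succ k =>
    rw [fussPoly_succ_eval]
    have := ascPochhammer_pos k (x + ((k : ℝ) + 3) / 2) (by positivity)
    positivity

lemma fussPoly_succ_eval_add_one (k : ℕ) (x : ℝ) :
    (fussPoly (k + 1)).eval (x + 1) =
      (fussPoly (k + 1)).eval x + (fussPoly k).eval (x + 3 / 2) := by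
  cases k with
  | zero => simp [fussPoly_succ_eval]
  | succ k =>
    rw [fussPoly_succ_eval, fussPoly_succ_eval, fussPoly_succ_eval, ascPochhammer_succ_eval,
      ascPochhammer_succ_eval_left, Nat.factorial_succ (k + 1)]
    have h₁ : x + 1 + (((k + 1 : ℕ) : ℝ) + 3) / 2 = x + 3 / 2 + ((k : ℝ) + 3) / 2 := by
      push_cast; ring
    have h₂ : x + (((k + 1 : ℕ) : ℝ) + 3) / 2 + 1 = x + 3 / 2 + ((k : ℝ) + 3) / 2 := by
      push_cast; ring
    rw [h₁, h₂]
    have : ((k + 1).factorial : ℝ) ≠ 0 := by positivity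
    have : (k : ℝ) + 1 + 1 ≠ 0 := by positivity
    push_cast
    field_simp
    ring

/-- The convolution identity `B ^ x * B ^ y = B ^ (x + y)` on coefficients. -/
lemma sum_antidiagonal_fussPoly (n : ℕ) (x y : ℝ) :
    ∑ ij ∈ Finset.HasAntidiagonal.antidiagonal n, (fussPoly ij.1).eval x * (fussPoly ij.2).eval y =
      (fussPoly n).eval (x + y) := by
  induction n generalizing x y with
  | zero => simp
  | succ n ih =>
    let d : Polynomial ℝ := ∑ ij ∈ Finset.HasAntidiagonal.antidiagonal (n + 1),
      fussPoly ij.1 * Polynomial.C ((fussPoly ij.2).eval y)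
        - (fussPoly (n + 1)).comp (Polynomial.X + Polynomial.C y)
    have d_eval (t : ℝ) : d.eval t =
        ∑ ij ∈ Finset.HasAntidiagonal.antidiagonal (n + 1), (fussPoly ij.1).eval t * (fussPoly ij.2).eval y
          - (fussPoly (n + 1)).eval (t + y) := by
      simp [d, Polynomial.eval_finsetSum]
    have d_zero : d.eval 0 = 0 := by
      rw [d_eval, Finset.Nat.sum_antidiagonal_succ]
      simp [fussPoly_succ_eval_zero]
    have d_periodic (t : ℝ) : d.eval (t + 1) = d.eval t := by
      have hs := ih (t + 3 / 2) y
      have hr := fussPoly_succ_eval_add_one n (t + y)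
      rw [d_eval, d_eval, Finset.Nat.sum_antidiagonal_succ, Finset.Nat.sum_antidiagonal_succ]
      simp only [fussPoly_succ_eval_add_one, fussPoly_zero_eval, add_mul, Finset.sum_add_distrib]
      rw [hs, show t + 1 + y = t + y + 1 by ring, hr, show t + y + 3 / 2 = t + 3 / 2 + y by ring]
      ring
    have d_nat (m : ℕ) : d.eval (m : ℝ) = 0 := by
      induction m with
      | zero => simpa using d_zero
      | succ m ihm => rw [Nat.cast_succ, d_periodic, ihm]
    have hd : d = 0 := Polynomial.eq_zero_of_infinite_isRoot d <|
      (Set.infinite_range_of_injective Nat.cast_injective).mono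
        (Set.range_subset_iff.2 d_nat)
    have := d_eval x
    rw [hd, Polynomial.eval_zero] at this
    linarith

lemma fussPoly_succ_eval_half_le (k : ℕ) :
    (fussPoly (k + 1)).eval (1 / 2) ≤ (fussPoly (k + 1)).eval 1 / 2 := by
  have h := ascPochhammer_eval_mono k (x := 1 / 2 + ((k : ℝ) + 3) / 2)
    (y := 1 + ((k : ℝ) + 3) / 2) (by positivity) (by linarith)
  rw [fussPoly_succ_eval, fussPoly_succ_eval]
  have : (0 : ℝ) ≤ ((k + 1).factorial : ℝ)⁻¹ := by positivity
  nlinarith [mul_le_mul_of_nonneg_left h this]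

lemma sum_range_fussPoly_add_one (z x : ℝ) (N : ℕ) :
    ∑ k ∈ Finset.range (N + 1), (fussPoly k).eval (x + 1) * z ^ k =
      ∑ k ∈ Finset.range (N + 1), (fussPoly k).eval x * z ^ k +
        z * ∑ k ∈ Finset.range N, (fussPoly k).eval (x + 3 / 2) * z ^ k := by
  simp only [Finset.sum_range_succ', fussPoly_succ_eval_add_one, add_mul, Finset.sum_add_distrib,
    Finset.mul_sum, fussPoly_zero_eval, pow_succ]
  simp only [← mul_assoc, mul_comm]
  ring

/-- The majorant solves `u (j + 2) = u j + z * u (j + 3)` at the critical `z = 2 / √3 ^ 3`. -/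
lemma sum_range_fussPoly_le (N j : ℕ) :
    ∑ k ∈ Finset.range N, (fussPoly k).eval ((j : ℝ) / 2) * (2 / √3 ^ 3) ^ k ≤
      √3 ^ j * (6 / 5 - 1 / 5 * (-1 / 2) ^ j) := by
  have hs : √3 ^ 2 = 3 := Real.sq_sqrt (by norm_num)
  have hs0 : 0 < √3 := by positivity
  induction N generalizing j with
  | zero =>
    have : |(-1 / 2 : ℝ) ^ j| ≤ 1 := by
      rw [abs_pow]; exact pow_le_one₀ (abs_nonneg _) (by norm_num [abs_le])
    have := (abs_le.1 this).2
    rw [Finset.sum_range_zero]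
    exact mul_nonneg (by positivity) (by linarith)
  | succ N ih =>
    have step (j : ℕ) (h : ∑ k ∈ Finset.range (N + 1),
          (fussPoly k).eval ((j : ℝ) / 2) * (2 / √3 ^ 3) ^ k ≤
            √3 ^ j * (6 / 5 - 1 / 5 * (-1 / 2) ^ j)) :
        ∑ k ∈ Finset.range (N + 1),
          (fussPoly k).eval (((j + 2 : ℕ) : ℝ) / 2) * (2 / √3 ^ 3) ^ k ≤
            √3 ^ (j + 2) * (6 / 5 - 1 / 5 * (-1 / 2) ^ (j + 2)) := by
      have h₃ := mul_le_mul_of_nonneg_left (ih (j + 3)) (show 0 ≤ 2 / √3 ^ 3 by positivity)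
      rw [show ((j + 2 : ℕ) : ℝ) / 2 = (j : ℝ) / 2 + 1 by push_cast; ring,
        sum_range_fussPoly_add_one]
      rw [show ((j + 3 : ℕ) : ℝ) / 2 = (j : ℝ) / 2 + 3 / 2 by push_cast; ring] at h₃
      refine (add_le_add h h₃).trans_eq ?_
      rw [pow_add √3 j 2, hs, pow_add √3 j 3]
      field_simp
      ring
    have base_zero : ∑ k ∈ Finset.range (N + 1),
        (fussPoly k).eval (((0 : ℕ) : ℝ) / 2) * (2 / √3 ^ 3) ^ k ≤
          √3 ^ 0 * (6 / 5 - 1 / 5 * (-1 / 2) ^ 0) := by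
      rw [Finset.sum_range_succ']
      simp [fussPoly_succ_eval_zero]
      norm_num
    induction j using Nat.twoStepInduction with
    | zero => exact base_zero
    | one =>
      have h₂ := step 0 base_zero
      rw [Finset.sum_range_succ'] at h₂ ⊢
      have hle : ∑ k ∈ Finset.range N,
          (fussPoly (k + 1)).eval (((1 : ℕ) : ℝ) / 2) * (2 / √3 ^ 3) ^ (k + 1) ≤
          (∑ k ∈ Finset.range N,
            (fussPoly (k + 1)).eval (((0 + 2 : ℕ) : ℝ) / 2) * (2 / √3 ^ 3) ^ (k + 1)) / 2 := by
        rw [Finset.sum_div]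
        refine Finset.sum_le_sum fun k _ => ?_
        have := mul_le_mul_of_nonneg_right (fussPoly_succ_eval_half_le k)
          (show 0 ≤ (2 / √3 ^ 3) ^ (k + 1) by positivity)
        norm_num at this ⊢
        linarith
      have hs1 : 173 / 100 ≤ √3 := Real.le_sqrt_of_sq_le (by norm_num)
      simp only [fussPoly_zero_eval, pow_zero, zero_add, hs] at h₂ ⊢
      norm_num at h₂ hle ⊢
      linarith
    | more j h _ => exact step j h

lemma summable_fussPoly_half : Summable fun k => (fussPoly k).eval (1 / 2) * (2 / √3 ^ 3) ^ k :=
  summable_of_sum_range_le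
    (fun k => mul_nonneg (fussPoly_eval_nonneg k (by norm_num)) (by positivity))
    fun N => by simpa using sum_range_fussPoly_le N 1

lemma hasSum_fussPoly_add {z x y a b : ℝ} (hz : 0 ≤ z) (hx : 0 ≤ x) (hy : 0 ≤ y)
    (ha : HasSum (fun k => (fussPoly k).eval x * z ^ k) a)
    (hb : HasSum (fun k => (fussPoly k).eval y * z ^ k) b) :
    HasSum (fun k => (fussPoly k).eval (x + y) * z ^ k) (a * b) := by
  have nonneg {t : ℝ} (ht : 0 ≤ t) (k : ℕ) : 0 ≤ (fussPoly k).eval t * z ^ k :=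
    mul_nonneg (fussPoly_eval_nonneg k ht) (pow_nonneg hz k)
  have hna := ha.summable.congr fun k => (Real.norm_of_nonneg (nonneg hx k)).symm
  have hnb := hb.summable.congr fun k => (Real.norm_of_nonneg (nonneg hy k)).symm
  have hsum := (summable_norm_sum_mul_antidiagonal_of_summable_norm hna hnb).of_norm.hasSum
  rw [← tsum_mul_tsum_eq_tsum_sum_antidiagonal_of_summable_norm hna hnb, ha.tsum_eq,
    hb.tsum_eq] at hsum
  refine hsum.congr_fun fun n => ?_
  rw [← sum_antidiagonal_fussPoly, Finset.sum_mul]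
  refine Finset.sum_congr rfl fun ij hij => ?_
  rw [← Finset.HasAntidiagonal.mem_antidiagonal.1 hij, pow_add]
  ring

/-- At the critical point the series for `B ^ (n / 2)` sums to `3 ^ (n / 2)`. -/
lemma hasSum_fussPoly_critical (n : ℕ) :
    HasSum (fun k => (fussPoly k).eval ((n : ℝ) / 2) * (2 / √3 ^ 3) ^ k) (√3 ^ n) := by
  obtain ⟨h, hh⟩ := summable_fussPoly_half
  have hz : 0 ≤ 2 / √3 ^ 3 := by positivity
  have hpow (n : ℕ) :
      HasSum (fun k => (fussPoly k).eval ((n : ℝ) / 2) * (2 / √3 ^ 3) ^ k) (h ^ n) := by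
    induction n with
    | zero =>
      rw [pow_zero]
      refine (hasSum_ite_eq 0 (1 : ℝ)).congr_fun fun k => ?_
      cases k <;> simp [fussPoly_succ_eval_zero]
    | succ n ih =>
      have := hasSum_fussPoly_add hz (by positivity) (by norm_num) ih hh
      rwa [← pow_succ, show (n : ℝ) / 2 + 1 / 2 = ((n + 1 : ℕ) : ℝ) / 2 by push_cast; ring] at this
  have hcubic : h ^ 2 = 1 + 2 / √3 ^ 3 * h ^ 3 := by
    have h₃ := ((hpow 3).mul_left (2 / √3 ^ 3))
    have h₂ : HasSum (fun k => (fussPoly (k + 1)).eval (((2 : ℕ) : ℝ) / 2) * (2 / √3 ^ 3) ^ (k + 1))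
        (2 / √3 ^ 3 * h ^ 3) := by
      refine h₃.congr_fun fun k => ?_
      have := fussPoly_succ_eval_add_one k 0
      rw [fussPoly_succ_eval_zero, zero_add, zero_add, zero_add] at this
      rw [show ((2 : ℕ) : ℝ) / 2 = 1 by norm_num, this, pow_succ, Nat.cast_ofNat]
      ring
    have h_succ := HasSum.zero_add
      (f := fun k => (fussPoly k).eval (((2 : ℕ) : ℝ) / 2) * (2 / √3 ^ 3) ^ k) h₂
    rw [fussPoly_zero_eval, pow_zero, mul_one] at h_succ
    exact (hpow 2).unique h_succ
  have h0 : 0 ≤ h := hh.nonneg fun k =>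
    mul_nonneg (fussPoly_eval_nonneg k (by norm_num)) (by positivity)
  have hs0 : 0 < √3 := by positivity
  have hs : √3 ^ 2 = 3 := Real.sq_sqrt (by norm_num)
  have hfactor : (h - √3) ^ 2 * (2 * h + √3) = 0 := by
    field_simp at hcubic
    linear_combination -hcubic + (h ^ 2 * √3) * hs
  have hroot : h = √3 := by
    rcases mul_eq_zero.1 hfactor with h' | h'
    · exact sub_eq_zero.1 (pow_eq_zero_iff two_ne_zero |>.1 h')
    · linarith
  exact hroot ▸ hpow n

lemma doubleFactorial_add_two_mul (n i : ℕ) :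
    ((n + 2 * i).doubleFactorial : ℝ) =
      n.doubleFactorial * (2 ^ i * (ascPochhammer ℝ i).eval ((n : ℝ) / 2 + 1)) := by
  induction i with
  | zero => simp
  | succ i ih =>
    rw [show n + 2 * (i + 1) = n + 2 * i + 2 by ring, Nat.doubleFactorial_add_two, Nat.cast_mul, ih,
      ascPochhammer_succ_eval]
    push_cast
    ring

lemma doubleFactorial_ratio_eq_fussPoly {m : ℕ} (hm : 1 ≤ m) (k : ℕ) :
    ((2 * m + 3 * k - 2).doubleFactorial : ℝ) /
        ((k.factorial : ℝ) * ((2 * m + k).doubleFactorial : ℝ)) =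
      2 ^ k * (fussPoly k).eval (m : ℝ) / (2 * m) := by
  have hm0 : (m : ℝ) ≠ 0 := by positivity
  have hd (n : ℕ) : (n.doubleFactorial : ℝ) ≠ 0 := by exact_mod_cast (Nat.doubleFactorial_pos n).ne'
  cases k with
  | zero =>
    obtain ⟨l, rfl⟩ : ∃ l, m = l + 1 := ⟨m - 1, by omega⟩
    have := hd (2 * l)
    rw [show 2 * (l + 1) + 3 * 0 - 2 = 2 * l by omega, show 2 * (l + 1) + 0 = 2 * l + 2 by ring,
      Nat.doubleFactorial_add_two]
    push_cast at hm0 ⊢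
    have : 2 * (l : ℝ) + 2 ≠ 0 := by positivity
    simp
    field_simp
  | succ k =>
    rw [show 2 * m + 3 * (k + 1) - 2 = 2 * m + (k + 1) + 2 * k by omega,
      doubleFactorial_add_two_mul, fussPoly_succ_eval,
      show ((2 * m + (k + 1) : ℕ) : ℝ) / 2 + 1 = m + ((k : ℝ) + 3) / 2 by push_cast; ring]
    have := hd (2 * m + (k + 1))
    have : ((k + 1).factorial : ℝ) ≠ 0 := by positivity
    field_simp
    ring

lemma hasSum_doubleFactorial_ratio {m : ℕ} (hm : 1 ≤ m) :
    HasSum (fun k : ℕ => ((12 * √3)⁻¹) ^ k * ((4 : ℝ) ^ k *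
        ((2 * m + 3 * k - 2).doubleFactorial : ℝ) /
          ((k.factorial : ℝ) * ((2 * m + k).doubleFactorial : ℝ))))
      (1 / 2 * 3 ^ m / m) := by
  have hs : √3 ^ 2 = 3 := Real.sq_sqrt (by norm_num)
  have hbase : 2 / √3 ^ 3 = (12 * √3)⁻¹ * 4 * 2 := by
    rw [pow_succ, hs]
    field_simp
    norm_num
  have h := (hasSum_fussPoly_critical (2 * m)).div_const (2 * m)
  rw [pow_mul, hs] at h
  rw [show (1 / 2 * 3 ^ m / m : ℝ) = 3 ^ m / (2 * m) by ring]
  refine h.congr_fun fun k => ?_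
  rw [mul_div_assoc, doubleFactorial_ratio_eq_fussPoly hm, hbase, mul_pow, mul_pow, Nat.cast_mul,
    Nat.cast_ofNat, mul_div_cancel_left₀ _ (two_ne_zero' ℝ)]
  ring


/-- For `L ≥ 1` and `p ≥ 1`, the series
`Z'(L,p) := ∑_{k≥0} (12√3)^{-k} · #T²(L,p,k)`, where
`#T²(L,p,k) = 4^k (2(L+p)+3k-2)!!/(k!(2(L+p)+k)!!) · L·binom(2L,L) · p·binom(2p,p)`,
equals `(1/2)·3^{L+p}/(L+p)·L·binom(2L,L)·p·binom(2p,p)`, and consequently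
`Z'(L,p) = 6⁴·π/(L+p) · C¹(L) · C¹(p)` with `C¹(n) = 3^{n-2}/(4√(2π))·n·binom(2n,n)`. -/
theorem statement2 (L p : ℕ) (hL : 1 ≤ L) (hp : 1 ≤ p) :
    (∑' k : ℕ,
        ((12 * Real.sqrt 3)⁻¹) ^ k *
          ((4 : ℝ) ^ k *
              (Nat.doubleFactorial (2 * (L + p) + 3 * k - 2) : ℝ) /
              ((Nat.factorial k : ℝ) * (Nat.doubleFactorial (2 * (L + p) + k) : ℝ)) *
            ((L : ℝ) * (Nat.choose (2 * L) L : ℝ)) *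
            ((p : ℝ) * (Nat.choose (2 * p) p : ℝ)))
        = (1 / 2) * (3 : ℝ) ^ (L + p) / ((L : ℝ) + p) *
            ((L : ℝ) * (Nat.choose (2 * L) L : ℝ)) *
            ((p : ℝ) * (Nat.choose (2 * p) p : ℝ)))
    ∧ (1 / 2) * (3 : ℝ) ^ (L + p) / ((L : ℝ) + p) *
          ((L : ℝ) * (Nat.choose (2 * L) L : ℝ)) *
          ((p : ℝ) * (Nat.choose (2 * p) p : ℝ))
        = 6 ^ 4 * Real.pi / ((L : ℝ) + p) *
            ((3 : ℝ) ^ ((L : ℤ) - 2) / (4 * Real.sqrt (2 * Real.pi)) *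
              ((L : ℝ) * (Nat.choose (2 * L) L : ℝ))) *
            ((3 : ℝ) ^ ((p : ℤ) - 2) / (4 * Real.sqrt (2 * Real.pi)) *
              ((p : ℝ) * (Nat.choose (2 * p) p : ℝ))) := by
  have hLp : ((L + p : ℕ) : ℝ) = L + p := Nat.cast_add L p
  constructor
  · have h := ((hasSum_doubleFactorial_ratio (show 1 ≤ L + p by omega)).mul_right
      ((L : ℝ) * (Nat.choose (2 * L) L : ℝ))).mul_right ((p : ℝ) * (Nat.choose (2 * p) p : ℝ))
    rw [hLp] at h
    rw [← h.tsum_eq]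
    refine tsum_congr fun k => ?_
    ring
  · have hpi : √(2 * Real.pi) ^ 2 = 2 * Real.pi := Real.sq_sqrt (by positivity)
    have : √(2 * Real.pi) ≠ 0 := by positivity
    have : (L : ℝ) + p ≠ 0 := by positivity
    rw [zpow_sub₀ three_ne_zero, zpow_sub₀ three_ne_zero, zpow_natCast, zpow_natCast, pow_add]
    field_simp
    rw [hpi]
    ring
end

section
/- Let q_k for k ∈ {1,0,-1,-2,...} be defined by q_1 = 1/√3 and q_k = 2·Z(k+1)·12^{-k} for k ≤ 0, where Z(m) = 6^m (2m-5)!!/(8√3·m!) (with the convention making Z(1) and Z(2) well-defined via (-1)!!=1 and the trivial triangulation). Then (q_k)_{k≤1} is a probability distribution on {...,-1,0,1} with mean zero: ∑_{k≤1} q_k = 1 and ∑_{k≤1} k·q_k = 0. -/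
open Filter Topology

/-- A nonnegative sequence of consecutive differences of a null sequence sums to its first term. -/
theorem hasSum_of_eq_sub_of_tendsto_zero {u t : ℕ → ℝ} (hu : ∀ n, 0 ≤ u n)
    (h : ∀ n, u n = t n - t (n + 1)) (ht : Tendsto t atTop (𝓝 0)) : HasSum u (t 0) := by
  rw [hasSum_iff_tendsto_nat_of_nonneg hu]
  have hs : ∀ n, ∑ i ∈ Finset.range n, u i = t 0 - t n := fun n => by
    simp only [h]
    exact Finset.sum_range_sub' t n
  simp only [hs]
  simpa using ht.const_sub (t 0)

theorem tendsto_zero_of_succ_mul_sq_le_one {R : ℕ → ℝ} (h0 : ∀ n, 0 ≤ R n)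
    (h : ∀ n : ℕ, ((n : ℝ) + 1) * R n ^ 2 ≤ 1) : Tendsto R atTop (𝓝 0) := by
  have hlim : Tendsto (fun n : ℕ => Real.sqrt (1 / ((n : ℝ) + 1))) atTop (𝓝 0) := by
    simpa only [Real.sqrt_zero] using
      (tendsto_one_div_add_atTop_nhds_zero_nat (𝕜 := ℝ)).sqrt
  refine squeeze_zero h0 (fun n => ?_) hlim
  apply Real.le_sqrt_of_sq_le
  rw [le_div_iff₀ (by positivity)]
  linarith [h n]

/-- The integrals `∫_0^{π/2} cosⁿ(ψ) · 3 sin(ψ/3) dψ`. -/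
noncomputable def cosPowSinThird (n : ℕ) : ℝ :=
  ∫ x in (0 : ℝ)..(Real.pi / 2), Real.cos x ^ n * (3 * Real.sin (x / 3))

theorem hasDerivAt_sin_third (x : ℝ) :
    HasDerivAt (fun x : ℝ => Real.sin (x / 3)) (Real.cos (x / 3) / 3) x := by
  simpa [div_eq_mul_inv] using ((hasDerivAt_id x).div_const 3).sin

theorem hasDerivAt_cos_third (x : ℝ) :
    HasDerivAt (fun x : ℝ => Real.cos (x / 3)) (-Real.sin (x / 3) / 3) x := by
  simpa [div_eq_mul_inv] using ((hasDerivAt_id x).div_const 3).cos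

theorem pi_div_two_div_three : Real.pi / 2 / 3 = Real.pi / 6 := by ring

theorem cosPowSinThird_zero : cosPowSinThird 0 = 9 * (1 - Real.sqrt 3 / 2) := by
  have h := intervalIntegral.integral_eq_sub_of_hasDerivAt
    (f := fun x : ℝ => -9 * Real.cos (x / 3))
    (f' := fun x : ℝ => Real.cos x ^ 0 * (3 * Real.sin (x / 3))) (a := 0) (b := Real.pi / 2)
    (fun x _ => ((hasDerivAt_cos_third x).const_mul (-9)).congr_deriv (by ring))
    (Continuous.intervalIntegrable (by fun_prop) _ _)
  rw [cosPowSinThird, h, pi_div_two_div_three, Real.cos_pi_div_six]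
  simp
  ring

theorem cosPowSinThird_one : cosPowSinThird 1 = 9 / 16 := by
  have h := intervalIntegral.integral_eq_sub_of_hasDerivAt
    (f := fun x : ℝ => 9 / 8 * (3 * (Real.sin x * Real.sin (x / 3)) +
      Real.cos x * Real.cos (x / 3)))
    (f' := fun x : ℝ => Real.cos x ^ 1 * (3 * Real.sin (x / 3))) (a := 0) (b := Real.pi / 2)
    (fun x _ => (((((Real.hasDerivAt_sin x).mul (hasDerivAt_sin_third x)).const_mul 3).add
      ((Real.hasDerivAt_cos x).mul (hasDerivAt_cos_third x))).const_mul (9 / 8)).congr_deriv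
      (by ring))
    (Continuous.intervalIntegrable (by fun_prop) _ _)
  rw [cosPowSinThird, h, pi_div_two_div_three, Real.cos_pi_div_six, Real.sin_pi_div_six]
  simp
  norm_num

theorem cosPowSinThird_add_two (n : ℕ) :
    1 + (((n : ℝ) + 2) ^ 2 - 1 / 9) * cosPowSinThird (n + 2) =
      ((n : ℝ) + 2) * (n + 1) * cosPowSinThird n := by
  have hc (m : ℕ) (x : ℝ) : HasDerivAt (fun x : ℝ => Real.cos x ^ (m + 1))
      (((m : ℝ) + 1) * Real.cos x ^ m * -Real.sin x) x := by
    exact ((Real.hasDerivAt_cos x).pow (m + 1)).congr_deriv (by push_cast [Nat.add_sub_cancel]; ring)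
  have h := intervalIntegral.integral_eq_sub_of_hasDerivAt
    (f := fun x : ℝ => -3 * ((n : ℝ) + 2) *
      (Real.cos x ^ (n + 1) * (Real.sin x * Real.sin (x / 3))) -
      Real.cos x ^ (n + 1 + 1) * Real.cos (x / 3))
    (f' := fun x : ℝ => ((n : ℝ) + 2) * (n + 1) * (Real.cos x ^ n * (3 * Real.sin (x / 3))) -
      (((n : ℝ) + 2) ^ 2 - 1 / 9) * (Real.cos x ^ (n + 2) * (3 * Real.sin (x / 3))))
    (a := 0) (b := Real.pi / 2)
    (fun x _ => ((((hc n x).mul ((Real.hasDerivAt_sin x).mul (hasDerivAt_sin_third x))).const_mul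
      (-3 * ((n : ℝ) + 2))).sub ((hc (n + 1) x).mul (hasDerivAt_cos_third x))).congr_deriv
      (by
        simp only [Pi.mul_apply]
        push_cast
        linear_combination (3 * ((n : ℝ) + 2) * (n + 1) * Real.cos x ^ n * Real.sin (x / 3)) *
          Real.sin_sq_add_cos_sq x))
    (Continuous.intervalIntegrable (by fun_prop) _ _)
  rw [intervalIntegral.integral_sub (Continuous.intervalIntegrable (by fun_prop) _ _)
    (Continuous.intervalIntegrable (by fun_prop) _ _), intervalIntegral.integral_const_mul,
    intervalIntegral.integral_const_mul] at h
  simp only [Real.cos_pi_div_two, Real.sin_zero, Real.cos_zero, zero_div] at h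
  simp only [cosPowSinThird]
  simp at h
  simp
  linarith

theorem cosPowSinThird_nonneg (n : ℕ) : 0 ≤ cosPowSinThird n := by
  have hpi := Real.pi_pos
  refine intervalIntegral.integral_nonneg (by positivity) fun x hx => ?_
  have h1 : 0 ≤ Real.cos x := Real.cos_nonneg_of_mem_Icc ⟨by linarith [hx.1], hx.2⟩
  have h2 : 0 ≤ Real.sin (x / 3) :=
    Real.sin_nonneg_of_nonneg_of_le_pi (by linarith [hx.1]) (by linarith [hx.2])
  positivity

theorem succ_mul_cosPowSinThird_le (n : ℕ) : ((n : ℝ) + 1) * cosPowSinThird n ≤ 2 := by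
  have hpi := Real.pi_pos
  have hi : ∫ x in (0 : ℝ)..(Real.pi / 2), ((n : ℝ) + 1) * (Real.cos x ^ n * Real.sin x) = 1 := by
    rw [intervalIntegral.integral_eq_sub_of_hasDerivAt (f := fun x => -Real.cos x ^ (n + 1))
      (fun x _ => (((Real.hasDerivAt_cos x).pow (n + 1)).neg).congr_deriv
        (by push_cast [Nat.add_sub_cancel]; ring))
      (Continuous.intervalIntegrable (by fun_prop) _ _)]
    simp
  rw [intervalIntegral.integral_const_mul] at hi
  have hle : cosPowSinThird n ≤
      ∫ x in (0 : ℝ)..(Real.pi / 2), 2 * (Real.cos x ^ n * Real.sin x) := by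
    refine intervalIntegral.integral_mono_on (by positivity)
      (Continuous.intervalIntegrable (by fun_prop) _ _)
      (Continuous.intervalIntegrable (by fun_prop) _ _) fun x hx => ?_
    have h1 : 0 ≤ Real.cos x := Real.cos_nonneg_of_mem_Icc ⟨by linarith [hx.1], hx.2⟩
    have h2 : Real.sin (x / 3) ≤ x / 3 := Real.sin_le (by linarith [hx.1])
    have h3 := Real.mul_le_sin hx.1 hx.2
    have h4 : x ≤ 2 * Real.sin x := by
      have h5 : x / 2 ≤ 2 / Real.pi * x := by
        rw [div_mul_eq_mul_div, div_le_div_iff₀ (by norm_num) hpi]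
        nlinarith [Real.pi_le_four, hx.1]
      linarith
    have h6 : 3 * Real.sin (x / 3) ≤ 2 * Real.sin x := by linarith
    calc Real.cos x ^ n * (3 * Real.sin (x / 3)) ≤ Real.cos x ^ n * (2 * Real.sin x) := by gcongr
      _ = 2 * (Real.cos x ^ n * Real.sin x) := by ring
  rw [intervalIntegral.integral_const_mul] at hle
  nlinarith [hle, hi, (Nat.cast_nonneg n : (0 : ℝ) ≤ n)]

/-- The sum of a sequence whose two-step ratio is `((k+1)² - 1/9) / ((k+3)(k+4))`. -/
theorem hasSum_of_two_step_recurrence {t : ℕ → ℝ} (h0 : ∀ k, 0 ≤ t k)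
    (hrec : ∀ k : ℕ, ((k : ℝ) + 3) * (k + 4) * t (k + 2) = (((k : ℝ) + 1) ^ 2 - 1 / 9) * t k)
    (ht0 : t 0 ≤ 1 / 10) (ht1 : t 1 ≤ 1 / 10) :
    HasSum t (9 / 8 * t 0 + (54 - 243 / 8 * Real.sqrt 3) * t 1) := by
  set R : ℕ → ℝ := fun k => ((k : ℝ) + 1) * (k + 2) * t k with hR
  set E : ℕ → ℝ := fun k => 9 / 8 * (((k : ℝ) + 2) * t k *
    (1 + (((k : ℝ) + 1) ^ 2 - 1 / 9) * cosPowSinThird (k + 1)) - R k) with hE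
  have hR0 : ∀ k, 0 ≤ R k := fun k => by have := h0 k; positivity
  have hRle : ∀ k : ℕ, ((k : ℝ) + 1) * R k ^ 2 ≤ 1 := by
    intro k
    induction k using Nat.twoStepInduction with
    | zero =>
      have := h0 0
      simp only [hR]
      push_cast
      nlinarith
    | one =>
      have := h0 1
      simp only [hR]
      push_cast
      nlinarith
    | more k ih _ =>
      refine le_trans ?_ ih
      have hk : R (k + 2) = (((k : ℝ) + 1) ^ 2 - 1 / 9) * t k := by
        rw [← hrec]
        simp only [hR]
        push_cast
        ring
      have hkk : R (k + 2) ≤ ((k : ℝ) + 1) ^ 2 * t k := by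
        rw [hk]
        exact mul_le_mul_of_nonneg_right (by linarith) (h0 k)
      have hsq := pow_le_pow_left₀ (hR0 (k + 2)) hkk 2
      calc (((k + 2 : ℕ) : ℝ) + 1) * R (k + 2) ^ 2
          ≤ (((k + 2 : ℕ) : ℝ) + 1) * (((k : ℝ) + 1) ^ 2 * t k) ^ 2 := by gcongr
        _ = (((k : ℝ) + 3) * (k + 1)) * (((k : ℝ) + 1) ^ 3 * t k ^ 2) := by push_cast; ring
        _ ≤ ((k : ℝ) + 2) ^ 2 * (((k : ℝ) + 1) ^ 3 * t k ^ 2) := by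
          have := h0 k
          gcongr
          nlinarith
        _ = ((k : ℝ) + 1) * R k ^ 2 := by simp only [hR]; ring
  have hRlim := tendsto_zero_of_succ_mul_sq_le_one hR0 hRle
  have hElim : Tendsto E atTop (𝓝 0) := by
    refine squeeze_zero_norm (a := fun k => 9 / 2 * R k) (fun k => ?_)
      (by simpa using hRlim.const_mul (9 / 2))
    have hI0 := cosPowSinThird_nonneg (k + 1)
    have hI := succ_mul_cosPowSinThird_le (k + 1)
    push_cast at hI
    have hk : (0 : ℝ) ≤ k := Nat.cast_nonneg k
    have htk := h0 k
    have hJ0 : 0 ≤ (((k : ℝ) + 1) ^ 2 - 1 / 9) * cosPowSinThird (k + 1) :=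
      mul_nonneg (by nlinarith) hI0
    have hJ : (((k : ℝ) + 1) ^ 2 - 1 / 9) * cosPowSinThird (k + 1) ≤ 2 * ((k : ℝ) + 1) := by
      nlinarith [mul_le_mul_of_nonneg_left hI (by positivity : (0 : ℝ) ≤ (k : ℝ) + 1),
        mul_nonneg hk hI0]
    have hu : ((k : ℝ) + 2) * t k *
        (1 + (((k : ℝ) + 1) ^ 2 - 1 / 9) * cosPowSinThird (k + 1)) ≤ 3 * R k := by
      calc _ ≤ ((k : ℝ) + 2) * t k * (3 * (k + 1)) := by
            gcongr
            linarith
        _ = 3 * R k := by simp only [hR]; ring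
    have hl : 0 ≤ ((k : ℝ) + 2) * t k *
        (1 + (((k : ℝ) + 1) ^ 2 - 1 / 9) * cosPowSinThird (k + 1)) := by positivity
    have := hR0 k
    rw [Real.norm_eq_abs, abs_le]
    constructor <;> simp only [hE] <;> linarith
  have hstep : ∀ k, t k = (E k + E (k + 1)) - (E (k + 1) + E (k + 1 + 1)) := by
    intro k
    have hI := cosPowSinThird_add_two (k + 1)
    have hr := hrec k
    simp only [hE, hR]
    push_cast at hI ⊢
    rw [show k + 1 + 1 = k + 2 from rfl] at *
    rw [show k + 2 + 1 = k + 1 + 2 from rfl]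
    linear_combination (9 / 8 * ((k : ℝ) + 4) * t (k + 2)) * hI +
      (9 / 8 * (((k : ℝ) + 2) * cosPowSinThird (k + 1) - 1)) * hr
  have hsum := hasSum_of_eq_sub_of_tendsto_zero (t := fun k => E k + E (k + 1)) h0 hstep
    (by simpa using hElim.add (hElim.comp (tendsto_add_atTop_nat 1)))
  convert hsum using 1
  have hI2 := cosPowSinThird_add_two 0
  rw [cosPowSinThird_zero] at hI2
  simp only [hE, hR]
  norm_num [cosPowSinThird_one] at hI2 ⊢
  linear_combination (-27 / 8 * t 1) * hI2

/-- The Boltzmann partition function of type I triangulations of the `1`-gon. -/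
theorem tsum_one_gon : ∑' k : ℕ,
      ((12 * Real.sqrt 3)⁻¹) ^ (k + 1) *
        ((4 : ℝ) ^ k * (Nat.doubleFactorial (3 * k) : ℝ) /
            ((Nat.factorial (k + 1) : ℝ) * (Nat.doubleFactorial (k + 2) : ℝ)) * 2) =
    1 / 2 - Real.sqrt 3 / 4 := by
  have h3 : Real.sqrt 3 ^ 2 = 3 := Real.sq_sqrt (by norm_num)
  have hs : 0 < Real.sqrt 3 := by positivity
  have hx : ((12 * Real.sqrt 3)⁻¹) ^ 2 = 1 / 432 := by rw [inv_pow, mul_pow, h3]; norm_num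
  have hx' : (12 * Real.sqrt 3)⁻¹ = Real.sqrt 3 / 36 := by
    field_simp
    linarith
  have hlt : Real.sqrt 3 < 2 := by nlinarith
  have h := hasSum_of_two_step_recurrence (t := fun k : ℕ => ((12 * Real.sqrt 3)⁻¹) ^ (k + 1) *
        ((4 : ℝ) ^ k * (Nat.doubleFactorial (3 * k) : ℝ) /
            ((Nat.factorial (k + 1) : ℝ) * (Nat.doubleFactorial (k + 2) : ℝ)) * 2))
    (fun k => by positivity) (fun k => ?_) ?_ ?_
  · rw [h.tsum_eq]
    norm_num [Nat.factorial, Nat.doubleFactorial, hx, -mul_inv_rev]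
    rw [hx']
    ring
  · have e1 : ((12 * Real.sqrt 3)⁻¹) ^ (k + 2 + 1) =
        ((12 * Real.sqrt 3)⁻¹) ^ (k + 1) * (1 / 432) := by
      rw [← hx]
      ring
    have e2 : Nat.doubleFactorial (3 * (k + 2)) =
        (3 * k + 6) * ((3 * k + 4) * ((3 * k + 2) * Nat.doubleFactorial (3 * k))) := rfl
    have e3 : Nat.doubleFactorial (k + 2 + 2) = (k + 4) * Nat.doubleFactorial (k + 2) := rfl
    have e4 : Nat.factorial (k + 2 + 1) = (k + 3) * ((k + 2) * Nat.factorial (k + 1)) := rfl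
    have p3 : (Nat.doubleFactorial (k + 2) : ℝ) ≠ 0 := by positivity
    have p4 : (Nat.factorial (k + 1) : ℝ) ≠ 0 := by positivity
    simp only [e1, e2, e3, e4]
    generalize ((12 * Real.sqrt 3)⁻¹) ^ (k + 1) = X
    push_cast
    field_simp
    ring
  · norm_num [Nat.factorial, Nat.doubleFactorial, -mul_inv_rev]
    rw [hx']
    linarith
  · norm_num [Nat.factorial, Nat.doubleFactorial, hx, -mul_inv_rev]

/-- The normalized weights `(2m-5)!! / (2^(m-1) m!)` with `m = j + 2`. -/
noncomputable def peelWeight (j : ℕ) : ℝ :=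
  (Nat.doubleFactorial (2 * (j + 2) - 5) : ℝ) / (2 ^ (j + 1) * (Nat.factorial (j + 2) : ℝ))

theorem peelWeight_nonneg (j : ℕ) : 0 ≤ peelWeight j := by
  unfold peelWeight
  positivity

theorem peelWeight_zero : peelWeight 0 = 1 / 4 := by
  norm_num [peelWeight, Nat.factorial, Nat.doubleFactorial]

theorem peelWeight_succ (j : ℕ) :
    2 * ((j : ℝ) + 3) * peelWeight (j + 1) = (2 * (j : ℝ) + 1) * peelWeight j := by
  have e1 : Nat.doubleFactorial (2 * (j + 1 + 2) - 5) =
      (2 * j + 1) * Nat.doubleFactorial (2 * (j + 2) - 5) := by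
    cases j with
    | zero => rfl
    | succ i =>
      rw [show 2 * (i + 1 + 1 + 2) - 5 = 2 * i + 1 + 2 by omega,
        show 2 * (i + 1 + 2) - 5 = 2 * i + 1 by omega, Nat.doubleFactorial_add_two]
      ring
  have e2 : Nat.factorial (j + 1 + 2) = (j + 3) * Nat.factorial (j + 2) := rfl
  have p : (Nat.factorial (j + 2) : ℝ) ≠ 0 := by positivity
  simp only [peelWeight, e1, e2]
  push_cast
  field_simp
  ring

theorem tendsto_mul_peelWeight :
    Tendsto (fun j : ℕ => ((j : ℝ) + 1) * (j + 2) * peelWeight j) atTop (𝓝 0) := by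
  refine tendsto_zero_of_succ_mul_sq_le_one
    (fun j => mul_nonneg (by positivity) (peelWeight_nonneg j)) fun j => ?_
  induction j with
  | zero => norm_num [peelWeight_zero]
  | succ j ih =>
    refine le_trans ?_ ih
    have hr : ((j : ℝ) + 3) * peelWeight (j + 1) = ((j : ℝ) + 1 / 2) * peelWeight j := by
      linarith [peelWeight_succ j]
    calc (((j + 1 : ℕ) : ℝ) + 1) *
          ((((j + 1 : ℕ) : ℝ) + 1) * (((j + 1 : ℕ) : ℝ) + 2) * peelWeight (j + 1)) ^ 2
        = ((j : ℝ) + 2) ^ 3 * (((j : ℝ) + 3) * peelWeight (j + 1)) ^ 2 := by push_cast; ring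
      _ = (((j : ℝ) + 2) * ((j : ℝ) + 1 / 2) ^ 2) * ((j + 2) ^ 2 * peelWeight j ^ 2) := by
        rw [hr]
        ring
      _ ≤ ((j : ℝ) + 1) ^ 3 * ((j + 2) ^ 2 * peelWeight j ^ 2) := by
        gcongr
        nlinarith [(Nat.cast_nonneg j : (0 : ℝ) ≤ j)]
      _ = _ := by ring

theorem hasSum_peelWeight : HasSum peelWeight (1 / 3) := by
  have h := hasSum_of_eq_sub_of_tendsto_zero
    (t := fun j : ℕ => 2 / 3 * (((j : ℝ) + 2) * peelWeight j)) peelWeight_nonneg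
    (fun j => by
      push_cast
      linear_combination (1 / 3) * peelWeight_succ j)
    (by
      refine squeeze_zero (fun j => ?_) (fun j => ?_) tendsto_mul_peelWeight
      · have := peelWeight_nonneg j
        positivity
      · have hp := mul_nonneg (by positivity : (0 : ℝ) ≤ (j : ℝ) + 2) (peelWeight_nonneg j)
        nlinarith [mul_nonneg (Nat.cast_nonneg j : (0 : ℝ) ≤ j) hp])
  convert h using 1
  norm_num [peelWeight_zero]

theorem hasSum_succ_mul_peelWeight :
    HasSum (fun j : ℕ => ((j : ℝ) + 1) * peelWeight j) (2 / 3) := by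
  have h := hasSum_of_eq_sub_of_tendsto_zero
    (u := fun j : ℕ => ((j : ℝ) + 1) * peelWeight j)
    (t := fun j : ℕ => (2 * (j : ℝ) + 4 / 3) * (((j : ℝ) + 2) * peelWeight j))
    (fun j => mul_nonneg (by positivity) (peelWeight_nonneg j))
    (fun j => by
      push_cast
      linear_combination ((j : ℝ) + 5 / 3) * peelWeight_succ j)
    (by
      refine squeeze_zero (fun j => ?_) (fun j => ?_)
        (by simpa using tendsto_mul_peelWeight.const_mul 2)
      · have := peelWeight_nonneg j
        positivity
      · have hp := mul_nonneg (by positivity : (0 : ℝ) ≤ (j : ℝ) + 2) (peelWeight_nonneg j)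
        nlinarith)
  convert h using 1
  norm_num [peelWeight_zero]

/-- Let `q_1 = 1/√3` and, for `m ≥ 0`, let `q_{-m} = 2·Z(m+1)·12^{-m}`
be the step probabilities of the peeling process of the type I UIPT, where
`Z(m) = 6^m (2m-5)!!/(8√3·m!)` for `m ≥ 2` (with the convention `(-1)!! = 1`,
realized via truncated subtraction on `ℕ`), and `Z(1)` is the Boltzmann partition
function of type I triangulations of the `1`-gon,
`Z(1) = ∑_{k≥1} (12√3)^{-k} #T¹(1,k)`.  Then `(q_k)_{k ≤ 1}` is a probability
distribution on `{…,-1,0,1}` with mean zero: `∑_{k≤1} q_k = 1` and `∑_{k≤1} k·q_k = 0`. -/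
theorem statement10 (Z : ℕ → ℝ)
    (hZ : ∀ m : ℕ, 2 ≤ m →
      Z m = 6 ^ m * (Nat.doubleFactorial (2 * m - 5) : ℝ) /
        (8 * Real.sqrt 3 * (Nat.factorial m : ℝ)))
    (hZ1 : Z 1 = ∑' k : ℕ,
      ((12 * Real.sqrt 3)⁻¹) ^ (k + 1) *
        ((4 : ℝ) ^ k * (Nat.doubleFactorial (3 * k) : ℝ) /
            ((Nat.factorial (k + 1) : ℝ) * (Nat.doubleFactorial (k + 2) : ℝ)) * 2)) :
    (1 / Real.sqrt 3 + ∑' m : ℕ, 2 * Z (m + 1) * ((12 : ℝ) ^ m)⁻¹ = 1) ∧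
      1 / Real.sqrt 3 - ∑' m : ℕ, (m : ℝ) * (2 * Z (m + 1) * ((12 : ℝ) ^ m)⁻¹) = 0 := by
  rw [tsum_one_gon] at hZ1
  have h3 : Real.sqrt 3 ^ 2 = 3 := Real.sq_sqrt (by norm_num)
  have hs : Real.sqrt 3 ≠ 0 := by positivity
  have hq (j : ℕ) : 2 * Z (j + 1 + 1) * ((12 : ℝ) ^ (j + 1))⁻¹ =
      Real.sqrt 3 / 2 * peelWeight j := by
    have p : (Nat.factorial (j + 2) : ℝ) ≠ 0 := by positivity
    rw [hZ (j + 1 + 1) (by omega), peelWeight, show (12 : ℝ) = 6 * 2 by norm_num, mul_pow,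
      show j + 1 + 1 = j + 2 from rfl]
    field_simp
    rw [h3]
    ring
  have hinv : 1 / Real.sqrt 3 = Real.sqrt 3 / 3 := by
    field_simp
    linarith
  have hsum : HasSum (fun m : ℕ => 2 * Z (m + 1) * ((12 : ℝ) ^ m)⁻¹)
      (Real.sqrt 3 / 2 * (1 / 3) + 2 * Z 1) := by
    have h := hasSum_peelWeight.mul_left (Real.sqrt 3 / 2)
    simp only [← hq] at h
    simpa using (hasSum_nat_add_iff (f := fun m : ℕ => 2 * Z (m + 1) * ((12 : ℝ) ^ m)⁻¹) 1).1 h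
  have hmean : HasSum (fun m : ℕ => (m : ℝ) * (2 * Z (m + 1) * ((12 : ℝ) ^ m)⁻¹))
      (Real.sqrt 3 / 2 * (2 / 3)) := by
    have h := hasSum_succ_mul_peelWeight.mul_left (Real.sqrt 3 / 2)
    simp only [mul_left_comm (Real.sqrt 3 / 2), ← hq] at h
    have h' := (hasSum_nat_add_iff
      (f := fun m : ℕ => (m : ℝ) * (2 * Z (m + 1) * ((12 : ℝ) ^ m)⁻¹)) 1).1
      (by simpa only [Nat.cast_add, Nat.cast_one] using h)
    simpa using h'
  rw [hsum.tsum_eq, hmean.tsum_eq, hinv, hZ1]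
  constructor <;> ring
end
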